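/- arXiv:1203.3173 — 4 statements merged into one kernel-verified Lean document; each statement's English description precedes it below -/
import Mathlib

section
/- Contractivity of the quadratic example: let f : S^d → ℝ^d be continuous and define h : ℝ^d × S^d × I_d → ℝ by h(u,θ,i) := f^i(θ) − (1/2) Σ_{j=1}^d (max(u^i − u^j, 0))². Then h is contractive: there exists M > 0 such that for every θ ∈ S^d, every i ∈ I_d and every u ∈ ℝ^d with ‖u‖_♯ > M: if u^j ≤ u^i for all j then h(u,θ,i) < (1/d) Σ_{j=1}^d h(u,θ,j), and if u^j ≥ u^i for all j then h(u,θ,i) > (1/d) Σ_{j=1}^d h(u,θ,j). -/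
open scoped BigOperators

/-- Euclidean norm on `Fin d → ℝ`. -/
noncomputable def enorm' {d : ℕ} (v : Fin d → ℝ) : ℝ := Real.sqrt (∑ j, v j ^ 2)

/-- The probability simplex `S^d`. -/
def simplex (d : ℕ) : Set (Fin d → ℝ) := {θ | (∀ i, 0 ≤ θ i) ∧ ∑ i, θ i = 1}

/-- The semi-norm `‖v‖_♯ = inf_λ ‖v + λ 𝟙‖`. -/
noncomputable def sharp {d : ℕ} (v : Fin d → ℝ) : ℝ :=
  ⨅ l : ℝ, enorm' (fun j => v j + l)

theorem sharp_aux {d : ℕ} (u : Fin d → ℝ) (i : Fin d) (M : ℝ) (hM : 0 < M)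
    (h : M < sharp u) : M ^ 2 < ∑ j, (u i - u j) ^ 2 := by
  have h1 : sharp u ≤ enorm' (fun j => u j + (- u i)) := by
    unfold sharp
    refine ciInf_le (f := fun l : ℝ => enorm' (fun j => u j + l)) ⟨0, ?_⟩ (- u i)
    rintro _ ⟨l, rfl⟩
    exact Real.sqrt_nonneg _
  have h2 := lt_of_lt_of_le h h1
  unfold enorm' at h2
  rw [Real.lt_sqrt hM.le] at h2
  refine lt_of_lt_of_eq h2 (Finset.sum_congr rfl fun j _ => by ring)

theorem simplex_compact (d : ℕ) : IsCompact (simplex d) :=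
  isCompact_stdSimplex ℝ (Fin d)

theorem g_max {d : ℕ} (u : Fin d → ℝ) (i : Fin d) (h : ∀ j, u j ≤ u i) :
    ∑ j, (max (u i - u j) 0) ^ 2 = ∑ j, (u i - u j) ^ 2 := by
  refine Finset.sum_congr rfl fun j _ => ?_
  rw [max_eq_left (by linarith [h j])]

theorem g_min {d : ℕ} (u : Fin d → ℝ) (i : Fin d) (h : ∀ j, u i ≤ u j) :
    ∑ j, (max (u i - u j) 0) ^ 2 = 0 := by
  refine Finset.sum_eq_zero fun j _ => ?_
  rw [max_eq_right (by linarith [h j])]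
  norm_num

/-- contractivity of the quadratic example. For continuous `f : S^d → ℝ^d`
and `h(u,θ,i) := f^i(θ) - (1/2) Σ_j (max(u^i - u^j,0))²`, there is `M > 0` such that for
all `θ ∈ S^d`, `i` and `u` with `‖u‖_♯ > M`: if `u^j ≤ u^i` for all `j` then
`h(u,θ,i) < (1/d) Σ_j h(u,θ,j)`, and if `u^j ≥ u^i` for all `j` then
`h(u,θ,i) > (1/d) Σ_j h(u,θ,j)`. -/
theorem statement9 {d : ℕ} (hd : 1 ≤ d) (f : (Fin d → ℝ) → Fin d → ℝ)
    (hf : ContinuousOn f (simplex d)) :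
    ∃ M : ℝ, 0 < M ∧ ∀ θ ∈ simplex d, ∀ i : Fin d, ∀ u : Fin d → ℝ, M < sharp u →
      ((∀ j, u j ≤ u i) →
        f θ i - (1/2) * ∑ j, (max (u i - u j) 0) ^ 2
          < (1/(d:ℝ)) * ∑ j, (f θ j - (1/2) * ∑ k, (max (u j - u k) 0) ^ 2)) ∧
      ((∀ j, u i ≤ u j) →
        (1/(d:ℝ)) * ∑ j, (f θ j - (1/2) * ∑ k, (max (u j - u k) 0) ^ 2)
          < f θ i - (1/2) * ∑ j, (max (u i - u j) 0) ^ 2) := by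
  obtain ⟨C, hC⟩ := (simplex_compact d).exists_bound_of_continuousOn hf
  have hd' : (1:ℝ) ≤ d := by exact_mod_cast hd
  have hd0 : (0:ℝ) < d := by linarith
  have : Nonempty (Fin d) := ⟨⟨0, hd⟩⟩
  refine ⟨4 * |C| * d + 1, by positivity, ?_⟩
  intro θ hθ i u hu
  have hfb : ∀ j, |f θ j| ≤ |C| := fun j =>
    ((norm_le_pi_norm (f θ) j).trans (hC θ hθ)).trans (le_abs_self C)
  have hMpos : 0 < 4 * |C| * d + 1 := by positivity
  have hM1 : 4 * |C| * d < (4 * |C| * d + 1) ^ 2 := by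
    have : 0 ≤ 4 * |C| * d := by positivity
    nlinarith
  have hQ : ∀ k, 4 * |C| * d < ∑ j, (u k - u j) ^ 2 := fun k =>
    hM1.trans (sharp_aux u k _ hMpos hu)
  set g : Fin d → ℝ := fun j => ∑ k, (max (u j - u k) 0) ^ 2 with hg
  have hg0 : ∀ j, 0 ≤ g j := fun j => Finset.sum_nonneg fun k _ => sq_nonneg _
  have hsum : ∑ j, (f θ j - (1/2) * g j) = ∑ j, f θ j - (1/2) * ∑ j, g j := by
    rw [Finset.sum_sub_distrib, Finset.mul_sum]
  have hfs1 : ∑ j, f θ j ≤ d * |C| := by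
    have := Finset.sum_le_sum fun j (_ : j ∈ Finset.univ) => (abs_le.1 (hfb j)).2
    simpa using this
  have hfs2 : -(d * |C|) ≤ ∑ j, f θ j := by
    have := Finset.sum_le_sum fun j (_ : j ∈ Finset.univ) => (abs_le.1 (hfb j)).1
    simpa using this
  have hfi := abs_le.1 (hfb i)
  have hdi1 : (d:ℝ) * f θ i ≤ d * |C| := mul_le_mul_of_nonneg_left hfi.2 hd0.le
  have hdi2 : (d:ℝ) * (-|C|) ≤ d * f θ i := mul_le_mul_of_nonneg_left hfi.1 hd0.le
  change ((∀ j, u j ≤ u i) →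
        f θ i - (1/2) * g i < (1/(d:ℝ)) * ∑ j, (f θ j - (1/2) * g j)) ∧
      ((∀ j, u i ≤ u j) →
        (1/(d:ℝ)) * ∑ j, (f θ j - (1/2) * g j) < f θ i - (1/2) * g i)
  rw [hsum, one_div_mul_eq_div (d:ℝ), lt_div_iff₀ hd0, div_lt_iff₀ hd0]
  constructor
  · intro hi
    obtain ⟨m, hm⟩ := Finite.exists_min u
    have hgi : 4 * |C| * d < g i := lt_of_lt_of_eq (hQ i) (g_max u i hi).symm
    have hgm : g m = 0 := g_min u m hm
    have hle : ∀ j, g j ≤ g i := fun j => Finset.sum_le_sum fun k _ =>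
      pow_le_pow_left₀ (le_max_right _ _)
        (max_le_max (by linarith [hi j]) le_rfl) 2
    have h1 : g i - g m ≤ ∑ j, (g i - g j) :=
      Finset.single_le_sum (f := fun j => g i - g j)
        (fun j _ => sub_nonneg.2 (hle j)) (Finset.mem_univ m)
    rw [Finset.sum_sub_distrib] at h1
    simp only [Finset.sum_const, Finset.card_univ, Fintype.card_fin, nsmul_eq_mul] at h1
    nlinarith
  · intro hi
    obtain ⟨m, hm⟩ := Finite.exists_max u
    have hgm : 4 * |C| * d < g m := lt_of_lt_of_eq (hQ m) (g_max u m hm).symm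
    have hgi : g i = 0 := g_min u i hi
    have h1 : g m ≤ ∑ j, g j :=
      Finset.single_le_sum (fun j _ => hg0 j) (Finset.mem_univ m)
    rw [hgi]
    nlinarith
end

section
/- Contraction property of linear cooperative ODE systems: let z : [0,T] → ℝ^Λ be a C¹ solution of −dz_m/dt = Σ_{m'∈Λ} a_{mm'}(t)·(z_{m'}(t) − z_m(t)) for every m ∈ Λ and t ∈ [0,T]. Then for every t ∈ [0,T]: max_{m∈Λ} |z_m(t)| ≤ max_{m∈Λ} |z_m(T)|; moreover, if z_m(T) ≤ 0 for every m ∈ Λ, then z_m(t) ≤ 0 for every m ∈ Λ and every t ∈ [0,T]. -/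
open scoped BigOperators

theorem aux_max {Λ : Type*} [Fintype Λ] [Nonempty Λ]
    (T : ℝ) (hT : 0 < T)
    (a : Λ → Λ → ℝ → ℝ)
    (hanonneg : ∀ m m', ∀ t ∈ Set.Icc (0:ℝ) T, 0 ≤ a m m' t)
    (z : ℝ → Λ → ℝ)
    (hz : ∀ m, ∀ t ∈ Set.Icc (0:ℝ) T, HasDerivWithinAt (fun s => z s m)
      (-(∑ m', a m m' t * (z t m' - z t m))) (Set.Icc 0 T) t)
    (C : ℝ) (hC : ∀ m, z T m ≤ C) : ∀ t ∈ Set.Icc (0:ℝ) T, ∀ m, z t m ≤ C := by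
  have key : ∀ ε > 0, ∀ t ∈ Set.Icc (0:ℝ) T, ∀ m, z t m + ε * t ≤ C + ε * T := by
    intro ε hε
    have hd : ∀ m, ∀ t ∈ Set.Icc (0:ℝ) T, HasDerivWithinAt (fun s => z s m + ε * s)
        (-(∑ m', a m m' t * (z t m' - z t m)) + ε * 1) (Set.Icc 0 T) t := fun m t ht =>
      (hz m t ht).add ((hasDerivWithinAt_id t _).const_mul ε)
    have hex : ∀ m, ∃ t ∈ Set.Icc (0:ℝ) T, IsMaxOn (fun s => z s m + ε * s) (Set.Icc 0 T) t :=
      fun m => isCompact_Icc.exists_isMaxOn ⟨0, le_rfl, hT.le⟩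
        (fun t ht => (hd m t ht).continuousWithinAt)
    choose τ hτ hmax using hex
    obtain ⟨m0, hm0⟩ := Finite.exists_max (fun m => z (τ m) m + ε * τ m)
    have hall : ∀ t ∈ Set.Icc (0:ℝ) T, ∀ m, z t m + ε * t ≤ z (τ m0) m0 + ε * τ m0 :=
      fun t ht m => le_trans (hmax m ht) (hm0 m)
    have hlast : τ m0 = T := by
      by_contra hne
      have hlt : τ m0 < T := lt_of_le_of_ne (hτ m0).2 hne
      have hy : T - τ m0 ∈ posTangentConeAt (Set.Icc 0 T) (τ m0) := by
        apply mem_posTangentConeAt_of_segment_subset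
        rw [add_sub_cancel, segment_eq_Icc hlt.le]
        exact Set.Icc_subset_Icc_left (hτ m0).1
      have h1 := (hmax m0).localize.hasFDerivWithinAt_nonpos
        (hd m0 _ (hτ m0)).hasFDerivWithinAt hy
      have h2 : ∑ m', a m0 m' (τ m0) * (z (τ m0) m' - z (τ m0) m0) ≤ 0 := by
        apply Finset.sum_nonpos
        intro m' _
        apply mul_nonpos_of_nonneg_of_nonpos (hanonneg _ _ _ (hτ m0))
        linarith [hall _ (hτ m0) m']
      simp at h1
      nlinarith [mul_pos (sub_pos.2 hlt) hε, mul_nonneg (sub_pos.2 hlt).le (neg_nonneg.2 h2)]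
    intro t ht m
    have h := hall t ht m
    rw [hlast] at h
    linarith [hC m0]
  intro t ht m
  apply le_of_forall_pos_le_add
  intro δ hδ
  have h := key (δ / T) (div_pos hδ hT) t ht m
  rw [div_mul_cancel₀ _ hT.ne'] at h
  have : 0 ≤ δ / T * t := mul_nonneg (div_pos hδ hT).le ht.1
  linarith

/-- contraction property of linear cooperative ODE systems. If
`-dz_m/dt = Σ_{m'} a_{mm'}(t)(z_{m'}(t) - z_m(t))` on `[0,T]` with continuous nonnegative
coefficients, then `max_m |z_m(t)| ≤ max_m |z_m(T)|` for all `t ∈ [0,T]`, and if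
`z(T) ≤ 0` then `z(t) ≤ 0` on `[0,T]`. -/
theorem statement16 {Λ : Type*} [Fintype Λ] [Nonempty Λ]
    (T : ℝ) (hT : 0 < T)
    (a : Λ → Λ → ℝ → ℝ)
    (hacont : ∀ m m', ContinuousOn (a m m') (Set.Icc 0 T))
    (hanonneg : ∀ m m', ∀ t ∈ Set.Icc (0:ℝ) T, 0 ≤ a m m' t)
    (z : ℝ → Λ → ℝ)
    (hz : ∀ m, ∀ t ∈ Set.Icc (0:ℝ) T, HasDerivWithinAt (fun s => z s m)
      (-(∑ m', a m m' t * (z t m' - z t m))) (Set.Icc 0 T) t) :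
    (∀ t ∈ Set.Icc (0:ℝ) T, ∀ m, |z t m| ≤ ‖z T‖) ∧
    ((∀ m, z T m ≤ 0) → ∀ t ∈ Set.Icc (0:ℝ) T, ∀ m, z t m ≤ 0) := by
  refine ⟨fun t ht m => abs_le.2 ⟨?_, ?_⟩, fun h => aux_max T hT a hanonneg z hz 0 h⟩
  · have h := aux_max T hT a hanonneg (fun s m => - z s m) (fun m t ht => by
      refine (hz m t ht).neg.congr_deriv ?_
      rw [← Finset.sum_neg_distrib, ← Finset.sum_neg_distrib, ← Finset.sum_neg_distrib]
      exact Finset.sum_congr rfl (fun _ _ => by ring)) ‖z T‖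
      (fun m => (neg_le_abs _).trans (norm_le_pi_norm (z T) m)) t ht m
    linarith
  · exact aux_max T hT a hanonneg z hz ‖z T‖
      (fun m => (le_abs_self _).trans (norm_le_pi_norm (z T) m)) t ht m
end

section
/- Comparison inequality for perturbed cooperative ODE systems: let g : [0,T] → ℝ^Λ be continuous and let z : [0,T] → ℝ^Λ be C¹ and satisfy, for every m ∈ Λ and s ∈ [0,T], −dz_m/dt(s) ≤ Σ_{m'∈Λ} a_{mm'}(s)·(z_{m'}(s) − z_m(s)) + g_m(s). Then for every m ∈ Λ and every t ∈ [0,T]: z_m(t) ≤ max_{m'∈Λ} |z_{m'}(T)| + ∫_t^T max_{m'∈Λ} |g_{m'}(s)| ds. -/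
open scoped BigOperators

/-- comparison inequality for perturbed cooperative ODE systems. If `z` is
C¹ with `-dz_m/dt(s) ≤ Σ_{m'} a_{mm'}(s)(z_{m'}(s) - z_m(s)) + g_m(s)` on `[0,T]`, the
coefficients `a_{mm'} ≥ 0` being continuous and `g` continuous, then
`z_m(t) ≤ max_{m'} |z_{m'}(T)| + ∫_t^T max_{m'} |g_{m'}(s)| ds`. -/
theorem statement17 {Λ : Type*} [Fintype Λ] [Nonempty Λ]
    (T : ℝ) (hT : 0 < T)
    (a : Λ → Λ → ℝ → ℝ)
    (hacont : ∀ m m', ContinuousOn (a m m') (Set.Icc 0 T))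
    (hanonneg : ∀ m m', ∀ t ∈ Set.Icc (0:ℝ) T, 0 ≤ a m m' t)
    (g : ℝ → Λ → ℝ)
    (hg : ∀ m, ContinuousOn (fun s => g s m) (Set.Icc 0 T))
    (z z' : ℝ → Λ → ℝ)
    (hz'cont : ∀ m, ContinuousOn (fun s => z' s m) (Set.Icc 0 T))
    (hz : ∀ m, ∀ t ∈ Set.Icc (0:ℝ) T, HasDerivWithinAt (fun s => z s m)
      (z' t m) (Set.Icc 0 T) t)
    (hineq : ∀ m, ∀ s ∈ Set.Icc (0:ℝ) T,
      -(z' s m) ≤ (∑ m', a m m' s * (z s m' - z s m)) + g s m) :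
    ∀ m, ∀ t ∈ Set.Icc (0:ℝ) T, z t m ≤ ‖z T‖ + ∫ s in t..T, ‖g s‖ := by
  set h : ℝ → ℝ := fun s => ‖g (Set.projIcc 0 T hT.le s)‖ with hh
  have hgc : ContinuousOn g (Set.Icc 0 T) := continuousOn_pi.2 hg
  have hhc : Continuous h := by
    have h1 : Continuous (fun s : ℝ => g (Set.projIcc 0 T hT.le s)) :=
      hgc.comp_continuous (continuous_subtype_val.comp continuous_projIcc)
        (fun s => (Set.projIcc 0 T hT.le s).2)
    exact h1.norm
  have hheq : ∀ s ∈ Set.Icc (0:ℝ) T, h s = ‖g s‖ := by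
    intro s hs
    simp only [hh, Set.projIcc_of_mem hT.le hs]
  have key : ∀ ε > 0, ∀ m, ∀ t ∈ Set.Icc (0:ℝ) T,
      z t m + (∫ s in T..t, h s) + ε * (t - T) ≤ ‖z T‖ := by
    intro ε hε
    set w : Λ → ℝ → ℝ := fun m t => z t m + (∫ s in T..t, h s) + ε * (t - T) with hw
    have hwd : ∀ m, ∀ t ∈ Set.Icc (0:ℝ) T,
        HasDerivWithinAt (w m) (z' t m + h t + ε) (Set.Icc 0 T) t := by
      intro m t ht
      have h1 : HasDerivAt (fun t => ∫ s in T..t, h s) (h t) t :=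
        intervalIntegral.integral_hasDerivAt_right (hhc.intervalIntegrable _ _)
          hhc.stronglyMeasurable.stronglyMeasurableAtFilter hhc.continuousAt
      have h2 : HasDerivAt (fun t : ℝ => ε * (t - T)) ε t := by
        simpa using ((hasDerivAt_id t).sub_const T).const_mul ε
      exact ((hz m t ht).add h1.hasDerivWithinAt).add h2.hasDerivWithinAt
    have hex : ∀ m, ∃ t ∈ Set.Icc (0:ℝ) T, IsMaxOn (w m) (Set.Icc 0 T) t := fun m =>
      isCompact_Icc.exists_isMaxOn (Set.nonempty_Icc.2 hT.le)
        (fun t ht => (hwd m t ht).continuousWithinAt)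
    choose τ hτ hmax using hex
    obtain ⟨m₀, hm₀⟩ := Finite.exists_max (fun m => w m (τ m))
    have hall : ∀ m, ∀ t ∈ Set.Icc (0:ℝ) T, w m t ≤ w m₀ (τ m₀) := fun m t ht =>
      (hmax m ht).trans (hm₀ m)
    suffices hfin : w m₀ (τ m₀) ≤ ‖z T‖ from fun m t ht => (hall m t ht).trans hfin
    generalize hτ₀ : τ m₀ = t₀ at *
    have ht₀ : t₀ ∈ Set.Icc (0:ℝ) T := hτ₀ ▸ hτ m₀
    rcases ht₀.2.eq_or_lt with heq | hlt
    · subst heq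
      have h1 : z t₀ m₀ ≤ ‖z t₀‖ := (le_abs_self _).trans (norm_le_pi_norm (z t₀) m₀)
      simpa [hw] using h1
    · exfalso
      have hd : HasDerivWithinAt (w m₀) (z' t₀ m₀ + h t₀ + ε) (Set.Ioi t₀) t₀ := by
        refine (hwd m₀ t₀ ht₀).mono_of_mem_nhdsWithin ?_
        exact Filter.mem_of_superset (Ioc_mem_nhdsGT hlt)
          (fun x hx => ⟨ht₀.1.trans hx.1.le, hx.2⟩)
      rw [hasDerivWithinAt_iff_tendsto_slope' (by simp)] at hd
      have hle : z' t₀ m₀ + h t₀ + ε ≤ 0 := by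
        refine le_of_tendsto hd ?_
        filter_upwards [Ioc_mem_nhdsGT hlt] with x hx
        rw [slope_def_field]
        exact div_nonpos_of_nonpos_of_nonneg
          (sub_nonpos.2 (hall m₀ x ⟨ht₀.1.trans hx.1.le, hx.2⟩)) (sub_nonneg.2 hx.1.le)
      have hsum : ∑ m', a m₀ m' t₀ * (z t₀ m' - z t₀ m₀) ≤ 0 := by
        refine Finset.sum_nonpos fun m' _ => ?_
        have h1 := hall m' t₀ ht₀
        simp only [hw] at h1
        exact mul_nonpos_of_nonneg_of_nonpos (hanonneg _ _ _ ht₀) (by linarith)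
      have h2 := hineq m₀ t₀ ht₀
      have h3 : g t₀ m₀ ≤ h t₀ := by
        rw [hheq t₀ ht₀]
        exact (le_abs_self _).trans (norm_le_pi_norm (g t₀) m₀)
      linarith
  intro m t ht
  have hint : ∫ s in t..T, ‖g s‖ = ∫ s in t..T, h s := by
    refine intervalIntegral.integral_congr fun s hs => ?_
    rw [Set.uIcc_of_le ht.2] at hs
    exact (hheq s ⟨ht.1.trans hs.1, hs.2⟩).symm
  rw [hint, intervalIntegral.integral_symm]
  refine le_of_forall_pos_le_add fun δ hδ => ?_
  have h1 := key (δ / T) (by positivity) m t ht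
  have h2 : δ / T * (T - t) ≤ δ := by
    rw [div_mul_eq_mul_div, div_le_iff₀ hT]
    nlinarith [ht.1]
  nlinarith
end

section
/- Scalar Riccati-type comparison: let C > 0, let N ≥ 1 be an integer, let T > 0, and let v : [0,T] → ℝ be differentiable with −dv/ds(s) = C·v(s) + C·N·v(s)² + C/N for all s ∈ [0,T] and v(T) ≤ C/N. Set T* := 1/(2C + 4C² + 1), which does not depend on N. If T ≤ T*, then v(s) ≤ 2C/N for all s ∈ [0,T]. -/
/-- scalar Riccati-type comparison. If `v` solves the backward ODE
`-dv/ds = C v + C N v² + C/N` on `[0,T]` with `v(T) ≤ C/N`, and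
`T ≤ T* := 1/(2C + 4C² + 1)` (independent of `N`), then `v(s) ≤ 2C/N` on `[0,T]`. -/
theorem statement18 (C : ℝ) (hC : 0 < C) (N : ℕ) (hN : 1 ≤ N)
    (T : ℝ) (hT : 0 < T) (v : ℝ → ℝ)
    (hv : ∀ s ∈ Set.Icc (0:ℝ) T, HasDerivWithinAt v
      (-(C * v s + C * N * (v s) ^ 2 + C / N)) (Set.Icc 0 T) s)
    (hvT : v T ≤ C / N)
    (hTstar : T ≤ 1 / (2 * C + 4 * C ^ 2 + 1)) :
    ∀ s ∈ Set.Icc (0:ℝ) T, v s ≤ 2 * C / N := by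
  have hN0 : (0:ℝ) < N := by exact_mod_cast hN
  set K : ℝ := 2 * C + 4 * C ^ 2 + 1 with hK
  have hKpos : 0 < K := by positivity
  have hKT : K * T ≤ 1 := by
    rw [le_div_iff₀ hKpos] at hTstar
    linarith
  have hcont : ContinuousOn v (Set.Icc 0 T) := fun s hs => (hv s hs).continuousWithinAt
  have key : ∀ ⦃x : ℝ⦄, x ∈ Set.Icc (0:ℝ) T → v (T - x) ≤ (C + C * K * x) / N := by
    refine image_le_of_deriv_right_lt_deriv_boundary' (f := fun x => v (T - x))
      (f' := fun x => C * v (T - x) + C * N * (v (T - x)) ^ 2 + C / N)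
      (B := fun x => (C + C * K * x) / N) (B' := fun _ => C * K / N) ?_ ?_ ?_ ?_ ?_ ?_
    · refine hcont.comp (by fun_prop) ?_
      intro x hx
      exact ⟨by linarith [hx.2], by linarith [hx.1]⟩
    · intro x hx
      have h1 := hv (T - x) ⟨by linarith [hx.2], by linarith [hx.1]⟩
      have h2 : HasDerivWithinAt (fun y : ℝ => T - y) (-1) (Set.Icc 0 T) x :=
        ((hasDerivAt_id x).const_sub T).hasDerivWithinAt
      have h3 := h1.comp x h2 (fun y hy => ⟨by linarith [hy.2], by linarith [hy.1]⟩)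
      have h4 := h3.mono (t := Set.Icc 0 T) (s := Set.Icc x T) (Set.Icc_subset_Icc_left hx.1)
      have h5 := h4.mono_of_mem_nhdsWithin (Icc_mem_nhdsGE hx.2)
      exact h5.congr_deriv (by ring)
    · simpa using hvT
    · fun_prop
    · intro x hx
      have := ((((hasDerivAt_id x).const_mul (C * K)).const_add C).div_const (N:ℝ))
      simpa using this.hasDerivWithinAt
    · intro x hx h
      rw [h]
      have hx0 := hx.1
      have hlt : K * x < 1 := lt_of_lt_of_le (mul_lt_mul_of_pos_left hx.2 hKpos) hKT
      set w := C + C * K * x with hw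
      have hw0 : 0 < w := by positivity
      have hw2 : w < 2 * C := by nlinarith
      have e : C * (w / N) + C * N * (w / N) ^ 2 + C / N = C * (w + w ^ 2 + 1) / N := by
        field_simp
      rw [e]
      have : w + w ^ 2 + 1 < K := by nlinarith
      gcongr
  intro s hs
  have h := key (x := T - s) ⟨by linarith [hs.2], by linarith [hs.1]⟩
  rw [sub_sub_cancel] at h
  refine h.trans ?_
  gcongr
  have : K * (T - s) ≤ 1 := by nlinarith [hs.1]
  nlinarith
end
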